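/- Let X be a compact connected doubling metric space satisfying the UWS condition with constant C. Then there exists a function C' : (0,1) → ℝ₊ such that for every x ∈ X and all radii 0 < s < r ≤ diam X, there is a finite set P ⊂ B(x,r) of cardinality at most C'(s/r) such that no connected component of X \ P intersects both B(x,s) and X \ closure(B(x,r)). -/

import Mathlib

open Metric Set Filter
open scoped ENNReal NNReal

/-- A metric space is doubling with constant `N` if every ball can be covered
by at most `N` balls of half the radius. -/
def DoublingWith (X : Type*) [PseudoMetricSpace X] (N : ℕ) : Prop :=
  ∀ (x : X) (r : ℝ), ∃ F : Finset X,
    F.card ≤ N ∧ Metric.ball x r ⊆ ⋃ y ∈ F, Metric.ball y (r / 2)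

/-- A metric space is doubling if some doubling constant works. -/
def Doubling (X : Type*) [PseudoMetricSpace X] : Prop :=
  ∃ N : ℕ, DoublingWith X N

/-- A metric space is linearly connected (bounded turning) if any two points are
contained in a continuum of diameter comparable to their distance. -/
def LinearlyConnected (X : Type*) [MetricSpace X] : Prop :=
  ∃ C : ℝ, 1 ≤ C ∧ ∀ x y : X, ∃ J : Set X,
    IsCompact J ∧ IsPreconnected J ∧ x ∈ J ∧ y ∈ J ∧ Metric.diam J ≤ C * dist x y

/-- The UWS condition with constant `C`: for every `x` and `r > 0` there is a finite set
`P ⊆ B(x,r)` of cardinality at most `C` so that no connected component of `X \ P`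
meets both `B(x, r/2)` and `X \ closure (B(x,r))`. -/
def UWSWith (X : Type*) [MetricSpace X] (C : ℝ) : Prop :=
  ∀ (x : X) (r : ℝ), 0 < r → ∃ P : Finset X,
    (P : Set X) ⊆ Metric.ball x r ∧ (P.card : ℝ) ≤ C ∧
    ∀ y : X, y ∉ P →
      ¬ ((connectedComponentIn ((P : Set X))ᶜ y ∩ Metric.ball x (r / 2)).Nonempty ∧
         (connectedComponentIn ((P : Set X))ᶜ y ∩ (closure (Metric.ball x r))ᶜ).Nonempty)

/-- Uniformly well spread local cut points. -/
def UWS (X : Type*) [MetricSpace X] : Prop :=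
  ∃ C : ℝ, 1 ≤ C ∧ UWSWith X C

/-- The WS (well spread local cut points) condition: there are finite sets `Pₙ`
such that the supremum of the diameters of the connected components of `X \ Pₙ`
tends to `0`. -/
def WS (X : Type*) [MetricSpace X] : Prop :=
  ∃ P : ℕ → Finset X,
    Filter.Tendsto
      (fun n => ⨆ y : X, Metric.diam (connectedComponentIn (((P n : Set X))ᶜ) y))
      Filter.atTop (nhds 0)

/-- A point `x` is a local cut point if some connected open set `U` containing `x`
is disconnected by removing `x`. -/
def LocalCutPoint {X : Type*} [MetricSpace X] (x : X) : Prop :=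
  ∃ U : Set X, IsOpen U ∧ IsPreconnected U ∧ x ∈ U ∧ ¬ IsPreconnected (U \ {x})

/-- The distance function of an explicitly given metric structure. -/
noncomputable def mdist {X : Type*} (m : MetricSpace X) (x y : X) : ℝ :=
  @dist X m.toPseudoMetricSpace.toDist x y

/-- A metric structure `m` on `X` is Ahlfors regular of dimension `α` if there is a
Radon measure giving every ball of radius `0 < r ≤ diam X` measure comparable to `r ^ α`. -/
def AhlforsRegularWith {X : Type*} (m : MetricSpace X) (α : ℝ) : Prop :=
  letI := m
  letI : MeasurableSpace X := borel X
  letI : BorelSpace X := ⟨rfl⟩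
  0 < α ∧ ∃ (μ : MeasureTheory.Measure X) (K : ℝ), 1 ≤ K ∧ μ ≠ 0 ∧ μ.Regular ∧
    ∀ (x : X) (r : ℝ), 0 < r → r ≤ Metric.diam (Set.univ : Set X) →
      ENNReal.ofReal (r ^ α / K) ≤ μ (Metric.ball x r) ∧
      μ (Metric.ball x r) ≤ ENNReal.ofReal (K * r ^ α)

/-- Two metric structures on `X` are quasisymmetrically equivalent if there is an
increasing homeomorphism `η` of `ℝ₊` controlling all ratios of distances. -/
def QuasisymmetricEquiv {X : Type*} (m₁ m₂ : MetricSpace X) : Prop :=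
  ∃ η : NNReal → NNReal, StrictMono η ∧ Continuous η ∧ Function.Surjective η ∧
    ∀ x y a : X, x ≠ y → x ≠ a → y ≠ a →
      (mdist m₂ x a).toNNReal / (mdist m₂ y a).toNNReal ≤
        η ((mdist m₁ x a).toNNReal / (mdist m₁ y a).toNNReal)

/-- Hausdorff dimension of `X` with respect to an explicitly given metric structure. -/
noncomputable def mDimH {X : Type*} (m : MetricSpace X) : ℝ≥0∞ :=
  @dimH X (@MetricSpace.toEMetricSpace X m) Set.univ

/-- The Ahlfors regular conformal dimension: the infimum of Hausdorff dimensions over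
all Ahlfors regular metrics quasisymmetrically equivalent to the given one. -/
noncomputable def ARConfDim (X : Type*) (m : MetricSpace X) : ℝ≥0∞ :=
  ⨅ (m' : MetricSpace X)
    (_ : QuasisymmetricEquiv m m' ∧ ∃ α : ℝ, AhlforsRegularWith m' α), mDimH m'

/-!
Let `t = s / r`. By the doubling property `B(x, s)` is covered by a number of balls `B(y, e)`
that depends only on `t`, where `e = s / 2 ^ k` with `k` so large that `s + 3 * e ≤ r`. Only the
centres `y` whose ball meets `B(x, s)` matter, and for these `B(y, 2 * e) ⊆ B(x, r)`. The sets
separating `B(y, e)` from the complement of the closure of `B(y, 2 * e)`, given by the UWS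
condition, therefore lie in `B(x, r)`, and their union separates all of `B(x, s)` from the
complement of the closure of `B(x, r)`.
-/

section Separator

variable {X ι : Type*} [TopologicalSpace X]

/-- `P` separates `A` from `B`: no connected component of the complement of `P` meets both `A`
and `B`. The sets `A` and `B` may meet each other inside `P`. -/
def IsSeparator (P A B : Set X) : Prop :=
  ∀ y ∉ P, ¬ ((connectedComponentIn Pᶜ y ∩ A).Nonempty ∧ (connectedComponentIn Pᶜ y ∩ B).Nonempty)

theorem IsSeparator.mono {P P' A A' B B' : Set X} (h : IsSeparator P A B) (hP : P ⊆ P')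
    (hA : A' ⊆ A) (hB : B' ⊆ B) : IsSeparator P' A' B' := by
  rintro y hy ⟨hyA, hyB⟩
  have hcomp : connectedComponentIn P'ᶜ y ⊆ connectedComponentIn Pᶜ y :=
    connectedComponentIn_mono y (compl_subset_compl.2 hP)
  exact h y (fun hyP => hy (hP hyP))
    ⟨hyA.mono (inter_subset_inter hcomp hA), hyB.mono (inter_subset_inter hcomp hB)⟩

theorem IsSeparator.biUnion {I : Set ι} {P A : ι → Set X} {B : Set X}
    (h : ∀ i ∈ I, IsSeparator (P i) (A i) B) :
    IsSeparator (⋃ i ∈ I, P i) (⋃ i ∈ I, A i) B := by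
  rintro y hy ⟨⟨a, hay, haA⟩, hyB⟩
  obtain ⟨i, hi, hai⟩ := mem_iUnion₂.1 haA
  exact (h i hi).mono (subset_biUnion_of_mem hi) Subset.rfl Subset.rfl y hy ⟨⟨a, hay, hai⟩, hyB⟩

end Separator

theorem exists_subset_cover_forall_inter_nonempty {X ι : Type*} {A : Set X} {F : Finset ι}
    {U : ι → Set X} (hF : A ⊆ ⋃ i ∈ F, U i) :
    ∃ G ⊆ F, A ⊆ ⋃ i ∈ G, U i ∧ ∀ i ∈ G, (U i ∩ A).Nonempty := by
  classical
  refine ⟨F.filter fun i => (U i ∩ A).Nonempty, Finset.filter_subset _ _, fun a ha => ?_,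
    fun i hi => (Finset.mem_filter.1 hi).2⟩
  obtain ⟨i, hi, hai⟩ := mem_iUnion₂.1 (hF ha)
  exact mem_iUnion₂.2 ⟨i, Finset.mem_filter.2 ⟨hi, a, hai, ha⟩, hai⟩

theorem ball_two_mul_subset_ball_of_inter_nonempty {X : Type*} [PseudoMetricSpace X] {x y : X}
    {s r e : ℝ} (hsr : s + 3 * e ≤ r) (h : (ball y e ∩ ball x s).Nonempty) :
    ball y (2 * e) ⊆ ball x r := by
  obtain ⟨a, hay, hax⟩ := h
  refine ball_subset_ball' ?_
  linarith [dist_triangle_left y x a, mem_ball.1 hay, mem_ball.1 hax]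

theorem DoublingWith.exists_cover_pow {X : Type*} [PseudoMetricSpace X] {N : ℕ}
    (h : DoublingWith X N) (x : X) (r : ℝ) (k : ℕ) :
    ∃ F : Finset X, F.card ≤ N ^ k ∧ ball x r ⊆ ⋃ y ∈ F, ball y (r / 2 ^ k) := by
  classical
  induction k with
  | zero => exact ⟨{x}, by simp, by simp⟩
  | succ k ih =>
    obtain ⟨F, hFcard, hF⟩ := ih
    choose G hGcard hG using fun y => h y (r / 2 ^ k)
    refine ⟨F.biUnion G, ?_, fun z hz => ?_⟩
    · calc (F.biUnion G).card ≤ F.card * N :=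
            Finset.card_biUnion_le_card_mul _ _ _ fun y _ => hGcard y
        _ ≤ N ^ k * N := by gcongr
        _ = N ^ (k + 1) := (pow_succ _ _).symm
    · obtain ⟨y, hy, hzy⟩ := mem_iUnion₂.1 (hF hz)
      obtain ⟨w, hw, hzw⟩ := mem_iUnion₂.1 (hG y hzy)
      rw [pow_succ, ← div_div]
      exact mem_iUnion₂.2 ⟨w, Finset.mem_biUnion.2 ⟨y, hy, hw⟩, hzw⟩

namespace UWSWith

variable {X : Type*} [MetricSpace X] {C : ℝ}

theorem exists_isSeparator (h : UWSWith X C) (x : X) {r : ℝ} (hr : 0 < r) :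
    ∃ P : Finset X, (P : Set X) ⊆ ball x r ∧ P.card ≤ ⌊C⌋₊ ∧
      IsSeparator (P : Set X) (ball x (r / 2)) (closure (ball x r))ᶜ := by
  obtain ⟨P, hP, hPcard, hsep⟩ := h x r hr
  exact ⟨P, hP, Nat.le_floor hPcard, hsep⟩

theorem exists_isSeparator_of_cover (h : UWSWith X C) {x : X} {s r e : ℝ} (he : 0 < e)
    (hsr : s + 3 * e ≤ r) {F : Finset X} (hF : ball x s ⊆ ⋃ y ∈ F, ball y e) :
    ∃ P : Finset X, (P : Set X) ⊆ ball x r ∧ P.card ≤ F.card * ⌊C⌋₊ ∧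
      IsSeparator (P : Set X) (ball x s) (closure (ball x r))ᶜ := by
  classical
  obtain ⟨G, hGF, hG, hGmeets⟩ := exists_subset_cover_forall_inter_nonempty hF
  have hball : ∀ y ∈ G, ball y (2 * e) ⊆ ball x r := fun y hy =>
    ball_two_mul_subset_ball_of_inter_nonempty hsr (hGmeets y hy)
  choose Q hQ hQcard hQsep using fun y => h.exists_isSeparator y (mul_pos two_pos he)
  have hsep : ∀ y ∈ G, IsSeparator (Q y : Set X) (ball y e) (closure (ball x r))ᶜ := fun y hy =>
    (hQsep y).mono Subset.rfl (by rw [mul_div_cancel_left₀ e two_ne_zero])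
      (compl_subset_compl.2 (closure_mono (hball y hy)))
  refine ⟨G.biUnion Q, ?_, ?_, ?_⟩
  · rw [Finset.coe_biUnion]
    exact iUnion₂_subset fun y hy => (hQ y).trans (hball y hy)
  · calc (G.biUnion Q).card ≤ G.card * ⌊C⌋₊ :=
          Finset.card_biUnion_le_card_mul _ _ _ fun y _ => hQcard y
      _ ≤ F.card * ⌊C⌋₊ := by gcongr
  · rw [Finset.coe_biUnion]
    exact (IsSeparator.biUnion hsep).mono Subset.rfl hG Subset.rfl

end UWSWith

/-- The number of halvings of a radius `s` after which three times the resulting radius fits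
between `s` and `r`, as a function of `t = s / r < 1`. -/
noncomputable def halvingDepth (t : ℝ) : ℕ :=
  Nat.clog 2 ⌈3 * t / (1 - t)⌉₊

theorem add_three_mul_div_two_pow_halvingDepth_le {s r : ℝ} (hr : 0 < r) (hsr : s < r) :
    s + 3 * (s / 2 ^ halvingDepth (s / r)) ≤ r := by
  have hdepth : 3 * (s / r) / (1 - s / r) ≤ 2 ^ halvingDepth (s / r) :=
    (Nat.le_ceil _).trans (mod_cast Nat.le_pow_clog one_lt_two _)
  have hratio : 3 * (s / r) / (1 - s / r) = 3 * s / (r - s) := by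
    rw [one_sub_div hr.ne', mul_div_assoc', div_div_div_cancel_right₀ hr.ne']
  rw [hratio, div_le_comm₀ (sub_pos.2 hsr) (by positivity), mul_div_assoc] at hdepth
  linarith

theorem uws_two_scales_general (X : Type*) [MetricSpace X] (N : ℕ) (hdbl : DoublingWith X N)
    (C : ℝ) (huws : UWSWith X C) :
    ∃ C' : ℝ → ℝ, (∀ t, 0 < t → t < 1 → 0 < C' t) ∧
      ∀ (x : X) (s r : ℝ), 0 < s → s < r →
        ∃ P : Finset X, (P : Set X) ⊆ ball x r ∧ (P.card : ℝ) ≤ C' (s / r) ∧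
          IsSeparator (P : Set X) (ball x s) (closure (ball x r))ᶜ := by
  refine ⟨fun t => (N ^ halvingDepth t * ⌊C⌋₊ + 1 : ℕ), fun t _ _ => by positivity,
    fun x s r hs hsr => ?_⟩
  obtain ⟨F, hFcard, hF⟩ := hdbl.exists_cover_pow x s (halvingDepth (s / r))
  obtain ⟨P, hP, hPcard, hsep⟩ := huws.exists_isSeparator_of_cover (by positivity)
    (add_three_mul_div_two_pow_halvingDepth_le (hs.trans hsr) hsr) hF
  have hcard : P.card ≤ N ^ halvingDepth (s / r) * ⌊C⌋₊ := hPcard.trans (by gcongr)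
  exact ⟨P, hP, Nat.cast_le.2 (hcard.trans (Nat.le_succ _)), hsep⟩

/-- The UWS condition self-improves to all pairs of scales `0 < s < r ≤ diam X`:
there is a function `C' : (0,1) → ℝ₊` bounding the number of points needed to separate
`B(x,s)` from `X \ closure (B(x,r))`, in terms of the ratio `s/r` only. -/
theorem uws_two_scales (X : Type*) [MetricSpace X] [CompactSpace X] [ConnectedSpace X]
    (N : ℕ) (hdbl : DoublingWith X N) (C : ℝ) (hC : 1 ≤ C) (huws : UWSWith X C) :
    ∃ C' : ℝ → ℝ, (∀ t, 0 < t → t < 1 → 0 < C' t) ∧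
      ∀ (x : X) (s r : ℝ), 0 < s → s < r → r ≤ Metric.diam (Set.univ : Set X) →
        ∃ P : Finset X, (P : Set X) ⊆ Metric.ball x r ∧ (P.card : ℝ) ≤ C' (s / r) ∧
          ∀ y : X, y ∉ P →
            ¬ ((connectedComponentIn ((P : Set X))ᶜ y ∩ Metric.ball x s).Nonempty ∧
               (connectedComponentIn ((P : Set X))ᶜ y ∩
                 (closure (Metric.ball x r))ᶜ).Nonempty) := by
  obtain ⟨C', hpos, hC'⟩ := uws_two_scales_general X N hdbl C huws
  exact ⟨C', hpos, fun x s r hs hsr _ => hC' x s r hs hsr⟩
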